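/- Assume (H). Then every C¹, T-periodic solution x* of (N) with nonconstant sign is unstable, in the following sense: there exist ε > 0 and t₀ ∈ ℝ such that for every δ > 0 there exist t₃ > t₀ and a solution x of (N) on [t₀, t₃) with |x(t₀) − x*(t₀)| < δ and sup_{t ∈ [t₀, t₃)} |x(t) − x*(t)| ≥ ε. -/

import Mathlib

open Set Filter Topology

/-!
Let `t₁` be a zero of the periodic solution `x`; the equation forces `A t₁ = 0`. Write `b`, `c`,
`-m` for `min |B|`, `max |C|`, `min A'`. Periodicity of `A` gives `m ≥ 0`, so (H) gives `b > 0` and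
`B` has constant sign; the symmetry `x ↦ -x`, `B ↦ -B` reduces to `B ≥ b > 0`.

Then there is a slope `k > 0` such that every solution `y` starting at `t₁` from a small value
`η > 0` stays above the line `η + k (t - t₁)` on `[t₁, t₁ + T]`. Indeed `A t ≥ -m (t - t₁)`, so the
slope field `A / y + B + C y` on the line is at least `-m / k + b - c (η + k T)`, and (H) says
exactly that this exceeds `k` for some `k > 0` and all small `η`. Hence `y (t₁ + T) ≥ k T` however
small `η` is, whereas `x (t₁ + T) = x t₁ = 0`. The line also keeps `y` away from the singularity
`y = 0` of the slope field, which is Lipschitz above it, so that `y` exists on the whole period.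
-/

section Bounds

lemma le_csSup_image_of_mem_closure {X α : Type*} [TopologicalSpace X]
    [ConditionallyCompleteLattice α] [TopologicalSpace α] [ClosedIicTopology α]
    {f : X → α} {s : Set X} {p : X} (hp : p ∈ closure s) (hf : ContinuousWithinAt f s p)
    (hbdd : BddAbove (f '' s)) : f p ≤ sSup (f '' s) :=
  closure_minimal (fun _ hz => le_csSup hbdd hz) isClosed_Iic (hf.mem_closure_image hp)

lemma forall_le_or_forall_le_neg_of_le_abs {X : Type*} [TopologicalSpace X] [PreconnectedSpace X]
    {f : X → ℝ} {b : ℝ} (hf : Continuous f) (hb : 0 < b) (h : ∀ p, b ≤ |f p|) :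
    (∀ p, b ≤ f p) ∨ ∀ p, b ≤ -f p := by
  have hsq : EqOn (f ^ 2) ((fun p => |f p|) ^ 2) univ := fun p _ => (sq_abs (f p)).symm
  rcases isPreconnected_univ.eq_or_eq_neg_of_sq_eq hf.continuousOn hf.abs.continuousOn hsq
    (fun {p} _ => (hb.trans_le (h p)).ne') with hpos | hneg
  · exact .inl fun p => (h p).trans_eq (hpos (mem_univ p)).symm
  · exact .inr fun p => (h p).trans_eq (neg_eq_iff_eq_neg.2 (hneg (mem_univ p))).symm

section Periodic

variable {α : Type*} [ConditionallyCompleteLinearOrder α] [TopologicalSpace α] [OrderTopology α]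
  {f : ℝ → α} {T : ℝ}

lemma le_csSup_image_Icc_of_periodic (hf : Continuous f) (hper : Function.Periodic f T)
    (hT : 0 < T) (a t : ℝ) : f t ≤ sSup (f '' Icc a (a + T)) :=
  have : Nonempty α := ⟨f t⟩
  le_csSup (isCompact_Icc.bddAbove_image hf.continuousOn) (hper.image_Icc hT a ▸ mem_range_self t)

lemma csInf_image_Icc_le_of_periodic (hf : Continuous f) (hper : Function.Periodic f T)
    (hT : 0 < T) (a t : ℝ) : sInf (f '' Icc a (a + T)) ≤ f t :=
  le_csSup_image_Icc_of_periodic (α := αᵒᵈ) hf hper hT a t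

end Periodic

lemma periodic_deriv {𝕜 E : Type*} [NontriviallyNormedField 𝕜] [NormedAddCommGroup E]
    [NormedSpace 𝕜 E] {f : 𝕜 → E} {c : 𝕜} (h : Function.Periodic f c) :
    Function.Periodic (deriv f) c := fun t => by
  rw [← deriv_comp_add_const, h.funext]

lemma exists_pos_mul_sq_add_lt_mul {p m b : ℝ} (hp : 0 < p) (hb : 0 < b)
    (h : 4 * m * p < b ^ 2) : ∃ k > 0, k ^ 2 * p + m < b * k := by
  refine ⟨b / (2 * p), by positivity, ?_⟩
  have hm : m < b ^ 2 / (4 * p) := by rw [lt_div_iff₀ (by positivity)]; linarith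
  calc (b / (2 * p)) ^ 2 * p + m < (b / (2 * p)) ^ 2 * p + b ^ 2 / (4 * p) := by gcongr
    _ = b * (b / (2 * p)) := by field_simp; norm_num

end Bounds

section IntegralCurves

open scoped NNReal

lemma exists_isIntegralCurveOn_Icc_of_norm_le {E : Type*} [NormedAddCommGroup E]
    [NormedSpace ℝ E] [CompleteSpace E] {F : ℝ → E → E} {a b t₀ : ℝ} {K L : ℝ≥0}
    (ht₀ : t₀ ∈ Icc a b) (hlip : ∀ t ∈ Icc a b, LipschitzWith K (F t))
    (hcont : ∀ z, ContinuousOn (F · z) (Icc a b)) (hle : ∀ t ∈ Icc a b, ∀ z, ‖F t z‖ ≤ L)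
    (y₀ : E) : ∃ y, y t₀ = y₀ ∧ IsIntegralCurveOn y F (Icc a b) := by
  -- As `F` is bounded on the whole space, the Picard–Lindelöf ball can be taken large enough for
  -- the solution to live on all of `[a, b]`.
  have hF : IsPicardLindelof F ⟨t₀, ht₀⟩ y₀ (L * (max (b - t₀) (t₀ - a)).toNNReal) 0 L K :=
    { lipschitzOnWith := fun t ht => (hlip t ht).lipschitzOnWith
      continuousOn := fun z _ => hcont z
      norm_le := fun t ht z _ => hle t ht z
      mul_max_le := by simp [ht₀.2] }
  exact hF.exists_eq_forall_mem_Icc_hasDerivWithinAt₀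

lemma exists_norm_le_of_lipschitzOnWith {X Y E : Type*} [TopologicalSpace X]
    [PseudoMetricSpace Y] [SeminormedAddCommGroup E] {F : X → Y → E} {s : Set X} {S : Set Y}
    {K : ℝ≥0} (hs : IsCompact s) (hS : Bornology.IsBounded S)
    (hlip : ∀ t ∈ s, LipschitzOnWith K (F t) S) (hcont : ∀ z ∈ S, ContinuousOn (F · z) s) :
    ∃ L : ℝ≥0, ∀ t ∈ s, ∀ z ∈ S, ‖F t z‖ ≤ L := by
  rcases S.eq_empty_or_nonempty with rfl | ⟨w, hw⟩
  · exact ⟨0, by simp⟩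
  obtain ⟨N, hN⟩ := hs.exists_bound_of_continuousOn (hcont w hw)
  refine ⟨(N + K * Metric.diam S).toNNReal, fun t ht z hz => le_trans ?_ (Real.le_coe_toNNReal _)⟩
  calc ‖F t z‖ ≤ ‖F t w‖ + dist (F t z) (F t w) := by
        rw [dist_eq_norm]; exact norm_le_norm_add_norm_sub' _ _
    _ ≤ N + K * dist z w := add_le_add (hN t ht) ((hlip t ht).dist_le_mul z hz w hw)
    _ ≤ N + K * Metric.diam S := by gcongr; exact Metric.dist_le_diam_of_mem hS hz hw

lemma hasDerivWithinAt_Ici_of_isIntegralCurveOn_Icc {E : Type*} [NormedAddCommGroup E]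
    [NormedSpace ℝ E] {F : ℝ → E → E} {y : ℝ → E} {a b : ℝ}
    (hy : IsIntegralCurveOn y F (Icc a b)) {t : ℝ} (ht : t ∈ Ico a b) :
    HasDerivWithinAt y (F t (y t)) (Ici t) t :=
  (hy t (Ico_subset_Icc_self ht)).mono_of_mem_nhdsWithin
    (mem_of_superset (Icc_mem_nhdsGE ht.2) (Icc_subset_Icc_left ht.1))

variable {F : ℝ → ℝ → ℝ} {a b r R y₀ : ℝ} {K : ℝ≥0}

lemma exists_isIntegralCurveOn_Icc_projIcc (hab : a ≤ b) (hrR : r ≤ R)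
    (hlip : ∀ t ∈ Icc a b, LipschitzOnWith K (F t) (Icc r R))
    (hcont : ∀ z ∈ Icc r R, ContinuousOn (F · z) (Icc a b)) (y₀ : ℝ) :
    ∃ y, y a = y₀ ∧ IsIntegralCurveOn y (fun t z => F t (projIcc r R hrR z)) (Icc a b) := by
  obtain ⟨L, hL⟩ := exists_norm_le_of_lipschitzOnWith isCompact_Icc (Metric.isBounded_Icc r R)
    hlip hcont
  exact exists_isIntegralCurveOn_Icc_of_norm_le (left_mem_Icc.2 hab)
    (fun t ht => (hlip t ht).to_restrict.comp (.projIcc hrR))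
    (fun z => hcont _ (projIcc r R hrR z).2) (fun t ht z => hL t ht _ (projIcc r R hrR z).2) y₀

lemma exists_isIntegralCurveOn_Icc_between {l l' u u' : ℝ → ℝ} (hab : a ≤ b)
    (hlip : ∀ t ∈ Icc a b, LipschitzOnWith K (F t) (Icc r R))
    (hcont : ∀ z ∈ Icc r R, ContinuousOn (F · z) (Icc a b))
    (hlr : ∀ t ∈ Icc a b, r ≤ l t) (hl : ContinuousOn l (Icc a b))
    (hl' : ∀ t ∈ Ico a b, HasDerivWithinAt l (l' t) (Ici t) t)
    (hlF : ∀ t ∈ Ico a b, l' t < F t (l t))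
    (hurR : ∀ t ∈ Icc a b, u t ∈ Icc r R) (hu : ContinuousOn u (Icc a b))
    (hu' : ∀ t ∈ Ico a b, HasDerivWithinAt u (u' t) (Ici t) t)
    (huF : ∀ t ∈ Ico a b, F t (u t) < u' t)
    (hy₀ : y₀ ∈ Icc (l a) (u a)) :
    ∃ y, y a = y₀ ∧ IsIntegralCurveOn y F (Icc a b) ∧ ∀ t ∈ Icc a b, y t ∈ Icc (l t) (u t) := by
  have hrR : r ≤ R := nonempty_Icc.1 ⟨_, hurR a (left_mem_Icc.2 hab)⟩
  obtain ⟨y, rfl, hy⟩ := exists_isIntegralCurveOn_Icc_projIcc hab hrR hlip hcont y₀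
  have hy' := fun t ht => hasDerivWithinAt_Ici_of_isIntegralCurveOn_Icc hy (t := t) ht
  have hyu : ∀ t ∈ Icc a b, y t ≤ u t := by
    refine image_le_of_deriv_right_lt_deriv_boundary' hy.continuousOn hy' hy₀.2 hu hu' ?_
    intro t ht heq
    rw [heq, projIcc_of_mem hrR (hurR t (Ico_subset_Icc_self ht))]
    exact huF t ht
  have hly : ∀ t ∈ Icc a b, l t ≤ y t := by
    refine image_le_of_deriv_right_lt_deriv_boundary' hl hl' hy₀.1 hy.continuousOn hy' ?_
    intro t ht heq
    have ht' := Ico_subset_Icc_self ht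
    rw [← heq, projIcc_of_mem hrR ⟨hlr t ht', heq ▸ (hyu t ht').trans (hurR t ht').2⟩]
    exact hlF t ht
  refine ⟨y, rfl, fun t ht => ?_, fun t ht => ⟨hly t ht, hyu t ht⟩⟩
  have hyrR : y t ∈ Icc r R :=
    ⟨(hlr t ht).trans (hly t ht), (hyu t ht).trans (hurR t ht).2⟩
  simpa only [projIcc_of_mem hrR hyrR] using hy t ht

lemma exists_isIntegralCurveOn_Icc_ge {l l' : ℝ → ℝ} (hab : a ≤ b)
    (hlip : ∀ t ∈ Icc a b, LipschitzOnWith K (F t) (Ici r))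
    (hcont : ∀ z ∈ Ici r, ContinuousOn (F · z) (Icc a b))
    (hlr : ∀ t ∈ Icc a b, r ≤ l t) (hl : ContinuousOn l (Icc a b))
    (hl' : ∀ t ∈ Ico a b, HasDerivWithinAt l (l' t) (Ici t) t)
    (hlF : ∀ t ∈ Ico a b, l' t < F t (l t)) (hy₀ : l a ≤ y₀) :
    ∃ y, y a = y₀ ∧ IsIntegralCurveOn y F (Icc a b) ∧ ∀ t ∈ Icc a b, l t ≤ y t := by
  have ha : a ∈ Icc a b := left_mem_Icc.2 hab
  obtain ⟨N, hN⟩ := isCompact_Icc.exists_bound_of_continuousOn (hcont r self_mem_Ici)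
  -- An upper barrier exists since `F t z ≤ N + K (z - r)` grows at most linearly in `z`.
  obtain ⟨D, hND, hy₀D⟩ : ∃ D, N < D ∧ y₀ - r < D :=
    (exists_gt (max N (y₀ - r))).imp fun _ => max_lt_iff.1
  have hD : 0 < D := ((norm_nonneg _).trans (hN a ha)).trans_lt hND
  let u := fun t => r + D * Real.exp ((K + 1) * (t - a))
  have hu' : ∀ t, HasDerivAt u ((K + 1) * (u t - r)) t := fun t => by
    refine ((((hasDerivAt_id t).sub_const a).const_mul (K + 1 : ℝ)).exp.const_mul D
      |>.const_add r).congr_deriv ?_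
    simp only [u, id]
    ring
  have hu : Monotone u := fun s t hst => by simp only [u]; gcongr
  have hua : u a = r + D := by simp [u]
  have hDu : ∀ t ∈ Icc a b, r + D ≤ u t := fun t ht => hua ▸ hu ht.1
  have huF : ∀ t ∈ Icc a b, F t (u t) < (K + 1) * (u t - r) := fun t ht => by
    have hrut : r ≤ u t := by linarith [hDu t ht]
    have hdist := (hlip t ht).dist_le_mul (u t) hrut r self_mem_Ici
    rw [Real.dist_eq, Real.dist_eq, abs_of_nonneg (sub_nonneg.2 hrut)] at hdist
    calc F t (u t) ≤ F t r + K * (u t - r) := by linarith [le_abs_self (F t (u t) - F t r)]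
      _ ≤ N + K * (u t - r) := by gcongr; exact (le_abs_self _).trans (hN t ht)
      _ < D + K * (u t - r) := by gcongr
      _ ≤ (K + 1) * (u t - r) := by linarith [hDu t ht]
  obtain ⟨y, hya, hy, hyl⟩ := exists_isIntegralCurveOn_Icc_between (R := u b) hab
    (fun t ht => (hlip t ht).mono Icc_subset_Ici_self) (fun z hz => hcont z hz.1) hlr hl hl' hlF
    (fun t ht => ⟨by linarith [hDu t ht], hu ht.2⟩)
    (fun t _ => (hu' t).continuousAt.continuousWithinAt) (fun t _ => (hu' t).hasDerivWithinAt)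
    (fun t ht => huF t (Ico_subset_Icc_self ht)) ⟨hy₀, by linarith⟩
  exact ⟨y, hya, hy, fun t ht => (hyl t ht).1⟩

end IntegralCurves

/-- `y` is a solution on `s`, with derivative `y'` relative to `s`, of the Abel equation
`y y' = A + B y + C y²`, which is kept undivided because `y` may vanish. -/
def IsAbelSolutionOn (A B C : ℝ → ℝ) (s : Set ℝ) (y y' : ℝ → ℝ) : Prop :=
  ∀ t ∈ s, HasDerivWithinAt y (y' t) s t ∧ y t * y' t = A t + B t * y t + C t * y t ^ 2

/-- Instability of `x` for the Abel equation: from some time `t₀` on, some solutions starting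
arbitrarily close to `x` separate from `x` by a fixed distance `ε` within their interval of
existence `[t₀, t₃)`. The supremum is `0`, hence not at least `ε`, if the distance is unbounded. -/
def IsAbelUnstable (A B C x : ℝ → ℝ) : Prop :=
  ∃ ε > (0 : ℝ), ∃ t₀ : ℝ, ∀ δ > (0 : ℝ), ∃ t₃ > t₀, ∃ y y' : ℝ → ℝ,
    IsAbelSolutionOn A B C (Ico t₀ t₃) y y' ∧ |y t₀ - x t₀| < δ ∧
      ε ≤ sSup ((fun t => |y t - x t|) '' Ico t₀ t₃)

/-- The slope field of the Abel equation solved for `y'`, meaningful at states `z ≠ 0` only. -/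
noncomputable def abelField (A B C : ℝ → ℝ) (t z : ℝ) : ℝ := A t / z + B t + C t * z

section Abel

variable {A B C : ℝ → ℝ}

lemma IsAbelSolutionOn.mono {s s' : Set ℝ} {y y' : ℝ → ℝ} (h : IsAbelSolutionOn A B C s y y')
    (hs : s' ⊆ s) : IsAbelSolutionOn A B C s' y y' :=
  fun t ht => ⟨(h t (hs ht)).1.mono hs, (h t (hs ht)).2⟩

lemma IsAbelSolutionOn.neg {s : Set ℝ} {y y' : ℝ → ℝ} (h : IsAbelSolutionOn A (-B) C s y y') :
    IsAbelSolutionOn A B C s (-y) (-y') := fun t ht => by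
  refine ⟨(h t ht).1.neg, ?_⟩
  have heq := (h t ht).2
  simp only [Pi.neg_apply] at heq ⊢
  linear_combination heq

lemma IsAbelUnstable.neg {x : ℝ → ℝ} (h : IsAbelUnstable A (-B) C (-x)) :
    IsAbelUnstable A B C x := by
  obtain ⟨ε, hε, t₀, h⟩ := h
  refine ⟨ε, hε, t₀, fun δ hδ => ?_⟩
  obtain ⟨t₃, ht₃, y, y', hy, hyδ, hyε⟩ := h δ hδ
  have habs : ∀ t, |(-y) t - x t| = |y t - (-x) t| := fun t => by
    rw [← abs_neg, Pi.neg_apply, Pi.neg_apply]; congr 1; ring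
  exact ⟨t₃, ht₃, -y, -y', hy.neg, by simpa only [habs] using hyδ, by simpa only [habs] using hyε⟩

lemma isAbelSolutionOn_of_isIntegralCurveOn {s : Set ℝ} {y : ℝ → ℝ}
    (hy : IsIntegralCurveOn y (abelField A B C) s) (hy₀ : ∀ t ∈ s, y t ≠ 0) :
    IsAbelSolutionOn A B C s y (fun t => abelField A B C t (y t)) := fun t ht => by
  refine ⟨hy t ht, ?_⟩
  have := hy₀ t ht
  simp only [abelField]
  field_simp

lemma lipschitzOnWith_abelField {a c η t : ℝ} (hη : 0 < η) (hA : |A t| ≤ a) (hC : |C t| ≤ c) :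
    LipschitzOnWith (a / η ^ 2 + c).toNNReal (abelField A B C t) (Ici η) := by
  refine .of_dist_le_mul fun z hz w hw => ?_
  have hz₀ : 0 < z := hη.trans_le hz
  have hw₀ : 0 < w := hη.trans_le hw
  have hdiff : abelField A B C t z - abelField A B C t w = (C t - A t / (z * w)) * (z - w) := by
    simp only [abelField]; field_simp; ring
  have hAzw : |A t / (z * w)| ≤ a / η ^ 2 := by
    rw [abs_div, abs_of_pos (mul_pos hz₀ hw₀), sq]
    exact div_le_div₀ ((abs_nonneg _).trans hA) hA (by positivity)
      (mul_le_mul hz hw hη.le hz₀.le)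
  rw [Real.dist_eq, Real.dist_eq, hdiff, abs_mul]
  gcongr
  refine le_trans ?_ (Real.le_coe_toNNReal _)
  linarith [abs_sub (C t) (A t / (z * w))]

lemma lt_abelField_line {T b c m k η s t : ℝ} (hk : 0 < k) (hη : 0 < η) (hm : 0 ≤ m)
    (hs : s ∈ Icc 0 T) (hA : -m * s ≤ A t) (hB : b ≤ B t) (hC : |C t| ≤ c)
    (h : k ^ 2 * (1 + T * c) + m + k * c * η < b * k) :
    k < abelField A B C t (η + k * s) := by
  have hks : 0 ≤ k * s := mul_nonneg hk.le hs.1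
  have hz : 0 < η + k * s := by linarith
  have hAz : -(m / k) ≤ A t / (η + k * s) := by
    rw [le_div_iff₀ hz]
    calc -(m / k) * (η + k * s) = -m * s - m / k * η := by field_simp; ring
      _ ≤ -m * s := sub_le_self _ (by positivity)
      _ ≤ A t := hA
  have hCz : -(c * (η + k * T)) ≤ C t * (η + k * s) := by
    rw [neg_le]
    calc -(C t * (η + k * s)) ≤ |C t| * (η + k * s) := by
          rw [← neg_mul]; gcongr; exact neg_le_abs _
      _ ≤ c * (η + k * T) := by gcongr; exacts [(abs_nonneg _).trans hC, hs.2]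
  have hkb : k + m / k + c * (η + k * T) < b := by
    refine lt_of_mul_lt_mul_right (lt_of_eq_of_lt ?_ h) hk.le
    field_simp
    ring
  simp only [abelField]
  linarith

variable {T b c m t₁ : ℝ}

lemma exists_isAbelSolutionOn_above_line {k η : ℝ} (hT : 0 ≤ T)
    (hA : ContinuousOn A (Icc t₁ (t₁ + T))) (hB : ContinuousOn B (Icc t₁ (t₁ + T)))
    (hC : ContinuousOn C (Icc t₁ (t₁ + T))) (hk : 0 < k) (hη : 0 < η) (hm : 0 ≤ m)
    (hAm : ∀ t ∈ Icc t₁ (t₁ + T), -m * (t - t₁) ≤ A t)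
    (hBb : ∀ t ∈ Icc t₁ (t₁ + T), b ≤ B t) (hCc : ∀ t ∈ Icc t₁ (t₁ + T), |C t| ≤ c)
    (h : k ^ 2 * (1 + T * c) + m + k * c * η < b * k) :
    ∃ y y', y t₁ = η ∧ IsAbelSolutionOn A B C (Icc t₁ (t₁ + T)) y y' ∧
      ∀ t ∈ Icc t₁ (t₁ + T), η + k * (t - t₁) ≤ y t := by
  obtain ⟨a, ha⟩ := isCompact_Icc.exists_bound_of_continuousOn hA
  have hline : ∀ t, HasDerivAt (fun t => η + k * (t - t₁)) k t := fun t => by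
    simpa using (((hasDerivAt_id t).sub_const t₁).const_mul k).const_add η
  have hηline : ∀ t ∈ Icc t₁ (t₁ + T), η ≤ η + k * (t - t₁) := fun t ht =>
    le_add_of_nonneg_right (mul_nonneg hk.le (sub_nonneg.2 ht.1))
  obtain ⟨y, hy₁, hy, hyline⟩ := exists_isIntegralCurveOn_Icc_ge (le_add_of_nonneg_right hT)
    (fun t ht => lipschitzOnWith_abelField (B := B) hη (ha t ht) (hCc t ht))
    (fun z _ => ((hA.div_const z).add hB).add (hC.mul_const z)) hηline
    (fun t _ => (hline t).continuousAt.continuousWithinAt) (fun t _ => (hline t).hasDerivWithinAt)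
    (fun t ht => have ht' := Ico_subset_Icc_self ht
      lt_abelField_line hk hη hm ⟨sub_nonneg.2 ht.1, by linarith [ht.2]⟩
        (hAm t ht') (hBb t ht') (hCc t ht') h)
    (y₀ := η) (by simp)
  exact ⟨y, _, hy₁, isAbelSolutionOn_of_isIntegralCurveOn hy fun t ht =>
    (hη.trans_le ((hηline t ht).trans (hyline t ht))).ne', hyline⟩

lemma isAbelUnstable_of_le {x : ℝ → ℝ} (hT : 0 < T)
    (hA : ContinuousOn A (Icc t₁ (t₁ + T))) (hB : ContinuousOn B (Icc t₁ (t₁ + T)))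
    (hC : ContinuousOn C (Icc t₁ (t₁ + T))) (hb : 0 < b) (hm : 0 ≤ m)
    (hcond : 4 * m * (1 + T * c) < b ^ 2)
    (hAm : ∀ t ∈ Icc t₁ (t₁ + T), -m * (t - t₁) ≤ A t)
    (hBb : ∀ t ∈ Icc t₁ (t₁ + T), b ≤ B t) (hCc : ∀ t ∈ Icc t₁ (t₁ + T), |C t| ≤ c)
    (hx : ContinuousOn x (Icc t₁ (t₁ + T))) (hx₁ : x t₁ = 0) (hx₂ : x (t₁ + T) = 0) :
    IsAbelUnstable A B C x := by
  have hlt : t₁ < t₁ + T := lt_add_of_pos_right t₁ hT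
  have hc : 0 ≤ c := (abs_nonneg _).trans (hCc t₁ (left_mem_Icc.2 hlt.le))
  obtain ⟨k, hk, hkb⟩ := exists_pos_mul_sq_add_lt_mul (by positivity) hb hcond
  refine ⟨k * T, by positivity, t₁, fun δ hδ => ?_⟩
  have hsmall : ∀ᶠ η in 𝓝[>] (0 : ℝ), k ^ 2 * (1 + T * c) + m + k * c * η < b * k :=
    nhdsWithin_le_nhds
      (ContinuousAt.eventually_lt (by fun_prop) continuousAt_const (by simpa using hkb))
  obtain ⟨η, hηb, hη, hηδ⟩ := (hsmall.and (Ioo_mem_nhdsGT hδ)).exists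
  obtain ⟨y, y', rfl, hy, hyline⟩ :=
    exists_isAbelSolutionOn_above_line hT.le hA hB hC hk hη hm hAm hBb hCc hηb
  have hcont : ContinuousOn (fun t => |y t - x t|) (Icc t₁ (t₁ + T)) :=
    ContinuousOn.abs (.sub (fun t ht => (hy t ht).1.continuousWithinAt) hx)
  have hend := right_mem_Icc.2 hlt.le
  refine ⟨t₁ + T, hlt, y, y', hy.mono Ico_subset_Icc_self, ?_, ?_⟩
  · rwa [hx₁, sub_zero, abs_of_pos hη]
  · calc k * T ≤ y (t₁ + T) - x (t₁ + T) := by linarith [hyline _ hend]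
      _ ≤ |y (t₁ + T) - x (t₁ + T)| := le_abs_self _
      _ ≤ sSup ((fun t => |y t - x t|) '' Ico t₁ (t₁ + T)) :=
        le_csSup_image_of_mem_closure (f := fun t => |y t - x t|) (closure_Ico hlt.ne ▸ hend)
          ((hcont _ hend).mono Ico_subset_Icc_self)
          ((isCompact_Icc.bddAbove_image hcont).mono (image_mono Ico_subset_Icc_self))

lemma isAbelUnstable_of_le_abs {x : ℝ → ℝ} (hT : 0 < T)
    (hA : ContinuousOn A (Icc t₁ (t₁ + T))) (hB : Continuous B)
    (hC : ContinuousOn C (Icc t₁ (t₁ + T))) (hb : 0 < b) (hm : 0 ≤ m)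
    (hcond : 4 * m * (1 + T * c) < b ^ 2)
    (hAm : ∀ t ∈ Icc t₁ (t₁ + T), -m * (t - t₁) ≤ A t)
    (hBb : ∀ t, b ≤ |B t|) (hCc : ∀ t ∈ Icc t₁ (t₁ + T), |C t| ≤ c)
    (hx : ContinuousOn x (Icc t₁ (t₁ + T))) (hx₁ : x t₁ = 0) (hx₂ : x (t₁ + T) = 0) :
    IsAbelUnstable A B C x := by
  rcases forall_le_or_forall_le_neg_of_le_abs hB hb hBb with hpos | hneg
  · exact isAbelUnstable_of_le hT hA hB.continuousOn hC hb hm hcond hAm (fun t _ => hpos t) hCc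
      hx hx₁ hx₂
  · exact .neg <| isAbelUnstable_of_le hT hA hB.neg.continuousOn hC hb hm hcond hAm
      (fun t _ => hneg t) hCc hx.neg (by simp [hx₁]) (by simp [hx₂])

end Abel

theorem nonconstant_sign_solution_unstable_general {T t₁ : ℝ} {A B C x : ℝ → ℝ} (hT : 0 < T)
    (hA : ContDiff ℝ 1 A) (hB : Continuous B) (hC : Continuous C)
    (hAper : Function.Periodic A T) (hBper : Function.Periodic B T)
    (hCper : Function.Periodic C T)
    (hcond : (sInf ((fun t => |B t|) '' Icc (0 : ℝ) T)) ^ 2 >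
      -4 * sInf ((fun t => deriv A t) '' Icc (0 : ℝ) T) *
        (1 + T * sSup ((fun t => |C t|) '' Icc (0 : ℝ) T)))
    (hx : ContinuousOn x (Icc t₁ (t₁ + T))) (hx₁ : x t₁ = 0) (hx₂ : x (t₁ + T) = 0)
    (hA₁ : A t₁ = 0) : IsAbelUnstable A B C x := by
  set b := sInf ((fun t => |B t|) '' Icc (0 : ℝ) T)
  set μ := sInf ((fun t => deriv A t) '' Icc (0 : ℝ) T)
  set c := sSup ((fun t => |C t|) '' Icc (0 : ℝ) T)
  have hBb : ∀ t, b ≤ |B t| := by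
    simpa only [zero_add] using csInf_image_Icc_le_of_periodic hB.abs (hBper.comp abs) hT 0
  have hAμ : ∀ t, μ ≤ deriv A t := by
    simpa only [zero_add] using csInf_image_Icc_le_of_periodic (hA.continuous_deriv le_rfl)
      (periodic_deriv hAper) hT 0
  have hCc : ∀ t, |C t| ≤ c := by
    simpa only [zero_add] using le_csSup_image_Icc_of_periodic hC.abs (hCper.comp abs) hT 0
  have hc : 0 ≤ c := (abs_nonneg _).trans (hCc 0)
  have hμ : μ ≤ 0 := by
    obtain ⟨s, -, hs⟩ := exists_deriv_eq_zero hT hA.continuous.continuousOn hAper.eq.symm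
    exact hs ▸ hAμ s
  have hb : 0 < b := by
    have hb₀ : 0 ≤ b := Real.sInf_nonneg (forall_mem_image.2 fun t _ => abs_nonneg (B t))
    have hb₂ : 0 < b ^ 2 :=
      hcond.trans_le' (mul_nonneg (by linarith) (by positivity))
    exact (sq_pos_iff.1 hb₂).symm.lt_of_le hb₀
  have hAm : ∀ t ∈ Icc t₁ (t₁ + T), -(-μ) * (t - t₁) ≤ A t := fun t ht => by
    simpa [hA₁] using mul_sub_le_image_sub_of_le_deriv (hA.differentiable one_ne_zero) hAμ ht.1
  exact isAbelUnstable_of_le_abs hT hA.continuous.continuousOn hB hC.continuousOn hb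
    (neg_nonneg.2 hμ) (by linarith) hAm hBb (fun t _ => hCc t) hx hx₁ hx₂

/-- under (H), every C¹, T-periodic solution of (N) with nonconstant sign
is unstable. -/
theorem nonconstant_sign_solution_unstable
    (T : ℝ) (hT : 0 < T) (A B C : ℝ → ℝ)
    (hA : ContDiff ℝ 1 A) (hB : ContDiff ℝ 1 B) (hC : ContDiff ℝ 1 C)
    (hAper : Function.Periodic A T) (hBper : Function.Periodic B T)
    (hCper : Function.Periodic C T)
    (hzero : ∃ t ∈ Icc (0 : ℝ) T, A t = 0)
    (hcond : (sInf ((fun t => |B t|) '' Icc (0 : ℝ) T)) ^ 2 >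
      -4 * sInf ((fun t => deriv A t) '' Icc (0 : ℝ) T) *
        (1 + T * sSup ((fun t => |C t|) '' Icc (0 : ℝ) T)))
    (x : ℝ → ℝ) (hx : ContDiff ℝ 1 x) (hxper : Function.Periodic x T)
    (hxsol : ∀ t : ℝ, x t * deriv x t = A t + B t * x t + C t * x t ^ 2)
    (hx0 : ∃ t₀ : ℝ, x t₀ = 0) (hxne : ∃ t : ℝ, x t ≠ 0) :
    ∃ ε > (0 : ℝ), ∃ t₀ : ℝ, ∀ δ > (0 : ℝ), ∃ t₃ > t₀, ∃ y y' : ℝ → ℝ,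
      (∀ t ∈ Ico t₀ t₃, HasDerivWithinAt y (y' t) (Ico t₀ t₃) t ∧
        y t * y' t = A t + B t * y t + C t * y t ^ 2) ∧
      |y t₀ - x t₀| < δ ∧
      ε ≤ sSup ((fun t => |y t - x t|) '' Ico t₀ t₃) := by
  obtain ⟨t₁, hx₁⟩ := hx0
  exact nonconstant_sign_solution_unstable_general hT hA hB.continuous hC.continuous hAper hBper
    hCper hcond hx.continuous.continuousOn hx₁ (by rw [hxper, hx₁])
    (by simpa [hx₁] using (hxsol t₁).symm)
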